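/- Let n be a natural number, Ω a finite type, c ≥ 0 a real number, and μ, ν : Fin n → Ω → ℝ functions with μ k ω > 0, ν k ω > 0, and |Real.log (μ k ω / ν k ω)| ≤ c for all k ∈ Fin n and ω ∈ Ω. Then for every nonempty finite set A of functions s : Fin n → Ω, |Real.log ( (∑_{s∈A} ∏_{k} μ k (s k)) / (∑_{s∈A} ∏_{k} ν k (s k)) )| ≤ c·n. -/

import Mathlib

theorem plb_aux (n : ℕ) (Ω : Type*) (c : ℝ)
    (μ ν : Fin n → Ω → ℝ)
    (hμ : ∀ k ω, 0 < μ k ω) (hν : ∀ k ω, 0 < ν k ω)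
    (hbd : ∀ k ω, Real.log (μ k ω) - Real.log (ν k ω) ≤ c)
    (A : Finset (Fin n → Ω)) (hA : A.Nonempty) :
    Real.log (∑ s ∈ A, ∏ k, μ k (s k)) - Real.log (∑ s ∈ A, ∏ k, ν k (s k)) ≤ c * n := by
  have pμ : 0 < ∑ s ∈ A, ∏ k, μ k (s k) :=
    Finset.sum_pos (fun s _ => Finset.prod_pos fun k _ => hμ k _) hA
  have pν : 0 < ∑ s ∈ A, ∏ k, ν k (s k) :=
    Finset.sum_pos (fun s _ => Finset.prod_pos fun k _ => hν k _) hA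
  have h1 : ∀ k ω, μ k ω ≤ Real.exp c * ν k ω := by
    intro k ω
    rw [← Real.log_le_log_iff (hμ k ω) (mul_pos (Real.exp_pos c) (hν k ω)),
      Real.log_mul (Real.exp_pos c).ne' (hν k ω).ne', Real.log_exp]
    linarith [hbd k ω]
  have h2 : ∑ s ∈ A, ∏ k, μ k (s k) ≤ Real.exp (c * n) * ∑ s ∈ A, ∏ k, ν k (s k) := by
    rw [Finset.mul_sum]
    refine Finset.sum_le_sum fun s _ => ?_
    calc ∏ k, μ k (s k) ≤ ∏ k, (Real.exp c * ν k (s k)) :=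
          Finset.prod_le_prod (fun k _ => (hμ k _).le) fun k _ => h1 k _
      _ = _ := by
          rw [Finset.prod_mul_distrib, Finset.prod_const, Finset.card_univ, Fintype.card_fin,
            ← Real.exp_nat_mul, mul_comm (n : ℝ) c]
  have h3 := Real.log_le_log pμ h2
  rw [Real.log_mul (Real.exp_pos _).ne' pν.ne', Real.log_exp] at h3
  linarith

/-- Abstract content of Lemma 4 of the paper: the private likelihood of any
event (a set of signal sequences) is bounded by `c * n`. -/
theorem private_likelihood_bound (n : ℕ) (Ω : Type*) [Fintype Ω] (c : ℝ) (hc : 0 ≤ c)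
    (μ ν : Fin n → Ω → ℝ)
    (hμ : ∀ k ω, 0 < μ k ω) (hν : ∀ k ω, 0 < ν k ω)
    (hbd : ∀ k ω, |Real.log (μ k ω / ν k ω)| ≤ c)
    (A : Finset (Fin n → Ω)) (hA : A.Nonempty) :
    |Real.log ((∑ s ∈ A, ∏ k, μ k (s k)) / (∑ s ∈ A, ∏ k, ν k (s k)))| ≤ c * n := by
  have pμ : 0 < ∑ s ∈ A, ∏ k, μ k (s k) :=
    Finset.sum_pos (fun s _ => Finset.prod_pos fun k _ => hμ k _) hA
  have pν : 0 < ∑ s ∈ A, ∏ k, ν k (s k) :=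
    Finset.sum_pos (fun s _ => Finset.prod_pos fun k _ => hν k _) hA
  have hb : ∀ k ω, |Real.log (μ k ω) - Real.log (ν k ω)| ≤ c := by
    intro k ω
    rw [← Real.log_div (hμ k ω).ne' (hν k ω).ne']
    exact hbd k ω
  rw [Real.log_div pμ.ne' pν.ne', abs_le]
  have h1 := plb_aux n Ω c μ ν hμ hν (fun k ω => (abs_le.1 (hb k ω)).2) A hA
  have h2 := plb_aux n Ω c ν μ hν hμ (fun k ω => by linarith [(abs_le.1 (hb k ω)).1]) A hA
  constructor <;> linarith
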